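/- arXiv:2512.11538 — 9 statements merged into one kernel-verified Lean document; each statement's English description precedes it below -/
import Mathlib

section
/- Let N be a finite-dimensional ℂ-vector space, ψ₁ : ℂ^n → N a linear map, ψ₂ : N × N → N a bilinear map, and v ∈ N, and suppose (ψ₁, ψ₂, v) is stable. If g is a linear automorphism of N satisfying g∘ψ₁ = ψ₁, g(v) = v, and ψ₂(g(x), g(y)) = g(ψ₂(x,y)) for all x, y ∈ N (equivalently, ψ₂^g = ψ₂), then g is the identity map of N. In other words, the action of flag-preserving automorphisms on stable tuples is free. -/
/-- A tuple `(ψ₁, ψ₂, v)` is *stable* if the only linear subspace `M ⊆ N` containing `v` and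
the image of `ψ₁` and satisfying `ψ₂ (M × M) ⊆ M` is `M = N`. -/
def IsStable {n : ℕ} {N : Type*} [AddCommGroup N] [Module ℂ N]
    (ψ₁ : (Fin n → ℂ) →ₗ[ℂ] N) (ψ₂ : N →ₗ[ℂ] N →ₗ[ℂ] N) (v : N) : Prop :=
  ∀ M : Submodule ℂ N, v ∈ M → (∀ c : Fin n → ℂ, ψ₁ c ∈ M) →
    (∀ x ∈ M, ∀ y ∈ M, ψ₂ x y ∈ M) → M = ⊤

/-- If `(ψ₁, ψ₂, v)` is a stable tuple on a finite-dimensional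
`ℂ`-vector space `N` and `g` is a linear automorphism of `N` fixing `ψ₁`, fixing `v`,
and intertwining `ψ₂` (equivalently `ψ₂^g = ψ₂`), then `g` is the identity: the action
on stable tuples is free. -/
theorem stabilizer_of_stable_tuple_trivial
    {n : ℕ} {N : Type*} [AddCommGroup N] [Module ℂ N] [FiniteDimensional ℂ N]
    (ψ₁ : (Fin n → ℂ) →ₗ[ℂ] N) (ψ₂ : N →ₗ[ℂ] N →ₗ[ℂ] N) (v : N)
    (hstable : IsStable ψ₁ ψ₂ v)
    (g : N ≃ₗ[ℂ] N)
    (hψ₁ : ∀ c : Fin n → ℂ, g (ψ₁ c) = ψ₁ c)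
    (hv : g v = v)
    (hψ₂ : ∀ x y : N, ψ₂ (g x) (g y) = g (ψ₂ x y)) :
    ∀ x : N, g x = x := by
  -- The fixed subspace of `g` contains `v` and the image of `ψ₁` and is closed under `ψ₂`,
  -- so stability forces it to be all of `N`.
  have h := hstable (LinearMap.eqLocus (g : N →ₗ[ℂ] N) LinearMap.id) (by simpa using hv)
    (fun c => by simpa using hψ₁ c)
    (fun x hx y hy => by
      have hx' : g x = x := hx
      have hy' : g y = y := hy
      change g (ψ₂ x y) = ψ₂ x y
      rw [← hψ₂, hx', hy'])
  intro x
  have hx : x ∈ LinearMap.eqLocus (g : N →ₗ[ℂ] N) LinearMap.id := h ▸ Submodule.mem_top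
  exact hx
end

section
/- Let A be a ℂ-vector space equipped with a symmetric (commutative) bilinear multiplication * and a chain of linear subspaces A = F_1 ⊇ F_2 ⊇ ⋯ ⊇ F_{r+1} = 0 such that x * y ∈ F_{k+1} whenever x ∈ F_1 and y ∈ F_k, for all 1 ≤ k ≤ r. Let W ⊆ A be a linear subspace. Then the smallest linear subspace of A containing W and closed under * equals A if and only if W + span{x * y : x, y ∈ A} = A. -/
/-!
Nakayama-style argument. If `W + A * A = A` and `M ⊇ W` is closed under multiplication, then
`M + F k = A` for every `k`, by induction: writing `x = m + f`, `y = m' + f'` with `m, m' ∈ M` and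
`f, f' ∈ F k` gives `x * y = m * m' + (m * f' + y * f)`, so `A * A ⊆ M + F (k+1)`, hence
`A = W + A * A ⊆ M + F (k+1)`. At the end of the chain this reads `M = A`. Conversely
`W + A * A` contains all products, so it is itself closed under multiplication.
-/

/-- Let `A` be a `ℂ`-vector space with a commutative bilinear
multiplication `μ` and a chain of subspaces `A = F 0 ⊇ F 1 ⊇ ⋯ ⊇ F r = 0`
(`F k` playing the role of `F_{k+1}` of the informal statement) such that `x * y ∈ F (k+1)`
whenever `x ∈ F 0 = A` and `y ∈ F k`.  For a subspace `W ⊆ A`, the smallest subspace of `A`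
containing `W` and closed under `μ` equals `A` iff `W + span {x * y} = A`. -/
theorem kazarian_stability
    {A : Type*} [AddCommGroup A] [Module ℂ A] {r : ℕ}
    (μ : A →ₗ[ℂ] A →ₗ[ℂ] A) (hcomm : ∀ x y : A, μ x y = μ y x)
    (F : Fin (r + 1) → Submodule ℂ A) (hanti : Antitone F)
    (hF0 : F 0 = ⊤) (hFlast : F (Fin.last r) = ⊥)
    (hfil : ∀ k : Fin r, ∀ x ∈ F 0, ∀ y ∈ F k.castSucc, μ x y ∈ F k.succ)
    (W : Submodule ℂ A) :
    (∀ M : Submodule ℂ A, W ≤ M → (∀ x ∈ M, ∀ y ∈ M, μ x y ∈ M) → M = ⊤) ↔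
      W ⊔ Submodule.span ℂ {z : A | ∃ x y : A, μ x y = z} = ⊤ := by
  constructor
  · intro h
    exact h _ le_sup_left fun x _ y _ =>
      Submodule.mem_sup_right (Submodule.subset_span ⟨x, y, rfl⟩)
  · intro h M hWM hM
    have key : ∀ k : Fin (r + 1), M ⊔ F k = ⊤ := by
      intro k
      induction k using Fin.induction with
      | zero => rw [hF0, sup_top_eq]
      | succ k ih =>
        rw [eq_top_iff, ← h]
        refine sup_le (hWM.trans le_sup_left) (Submodule.span_le.2 ?_)
        rintro _ ⟨x, y, rfl⟩
        have hx : x ∈ M ⊔ F k.castSucc := ih ▸ Submodule.mem_top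
        have hy : y ∈ M ⊔ F k.castSucc := ih ▸ Submodule.mem_top
        obtain ⟨m, hm, f, hf, rfl⟩ := Submodule.mem_sup.1 hx
        obtain ⟨m', hm', f', hf', rfl⟩ := Submodule.mem_sup.1 hy
        have hfil' : ∀ a : A, ∀ b ∈ F k.castSucc, μ a b ∈ F k.succ := fun a b hb =>
          hfil k a (hF0 ▸ Submodule.mem_top) b hb
        refine Submodule.mem_sup.2 ⟨μ m m', hM m hm m' hm', μ m f' + μ (m' + f') f,
          add_mem (hfil' _ _ hf') (hfil' _ _ hf), ?_⟩
        rw [hcomm (m' + f') f, map_add μ, LinearMap.add_apply, map_add (μ m), add_assoc]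
    simpa [hFlast] using key (Fin.last r)
end

section
/- Let λ ⊆ ℕ^n be a finite order ideal and let u ∈ λ be nonzero. Then W_T(u) ≤ W_B(u). -/
/-!
Choose a coordinate `i` with `u i ≠ 0` and put `e = Pi.single i 1`. Let `S` be the set of
`w ∈ Λ` with `w ≠ 0`, `w ≠ e`, `w + e ≤ u` and `w + e ≠ u`.

Every unordered pair `{v, w}` with `v + w = u`, other than `{e, u - e}`, has a member in `S`:
as `v i + w i = u i > 0`, one of the two, say `w`, satisfies `w i < u i`, that is `w + e ≤ u`, and
`w = e` or `w + e = u` would force the pair to be `{e, u - e}`. The pair is recovered from `w` as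
`{w, u - w}`, so there are at most `|S| + 1` pairs (`pairs_card_le`). On the other hand each
`w ∈ S` yields the two triples `(w, u - e - w, e)` and `(e, u - e - w, w)`, and all of these are
distinct, so there are at least `2 |S|` triples (`two_mul_card_le_triples`).
-/

/-- A finite *order ideal* in `ℕ^n`: a finite set of exponent vectors closed under
taking coordinatewise smaller vectors. -/
def IsOrderIdeal {n : ℕ} (Λ : Finset (Fin n → ℕ)) : Prop :=
  ∀ u ∈ Λ, ∀ v : Fin n → ℕ, v ≤ u → v ∈ Λ

/-- `WT Λ u`: it is `0` if `u` is a standard unit vector, and otherwise the number of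
unordered pairs `{v, w}` with `v, w ∈ Λ \ {0}` and `v + w = u` (with `v = w` allowed),
minus `1`. -/
def WT {n : ℕ} (Λ : Finset (Fin n → ℕ)) (u : Fin n → ℕ) : ℤ :=
  if ∃ i : Fin n, u = Pi.single i 1 then 0
  else (((Λ.erase 0).sym2.filter
      (fun p => Sym2.lift ⟨fun v w => v + w, fun _ _ => add_comm _ _⟩ p = u)).card : ℤ) - 1

/-- `WB Λ u`: half the number of ordered triples `(v, s, w) ∈ (Λ \ {0})³` with `v ≠ w`
and `v + s + w = u`. -/
def WB {n : ℕ} (Λ : Finset (Fin n → ℕ)) (u : Fin n → ℕ) : ℕ :=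
  (((Λ.erase 0) ×ˢ (Λ.erase 0) ×ˢ (Λ.erase 0)).filter
      (fun t => t.1 ≠ t.2.2 ∧ t.1 + t.2.1 + t.2.2 = u)).card / 2

open Classical in
/-- The nonzero `w ∈ Λ` different from `e` with `w + e < u` (coordinatewise `≤`, and not equal). -/
noncomputable def reducedSet {n : ℕ} (Λ : Finset (Fin n → ℕ)) (u e : Fin n → ℕ) :
    Finset (Fin n → ℕ) :=
  Λ.filter (fun w => w ≠ 0 ∧ w ≠ e ∧ w + e ≤ u ∧ w + e ≠ u)

lemma mem_reducedSet {n : ℕ} {Λ : Finset (Fin n → ℕ)} {u e w : Fin n → ℕ} :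
    w ∈ reducedSet Λ u e ↔ w ∈ Λ ∧ w ≠ 0 ∧ w ≠ e ∧ w + e ≤ u ∧ w + e ≠ u := by
  classical
  exact Finset.mem_filter

lemma mem_reducedSet_of_add_eq {n : ℕ} {Λ : Finset (Fin n → ℕ)} {u v w : Fin n → ℕ} {i : Fin n}
    (hw : w ∈ Λ) (hw0 : w ≠ 0) (hvw : v + w = u) (hv : v i ≠ 0)
    (hwe : w ≠ Pi.single i 1) (hve : v ≠ Pi.single i 1) :
    w ∈ reducedSet Λ u (Pi.single i 1) := by
  refine mem_reducedSet.2 ⟨hw, hw0, hwe, ?_, ?_⟩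
  · subst hvw
    rw [add_comm v w]
    refine add_le_add_right (fun j => ?_) w
    by_cases hj : j = i
    · subst hj
      simp only [Pi.single_eq_same]
      omega
    · simp [hj]
  · rintro h
    apply hve
    rw [← hvw, add_comm v w] at h
    exact (add_left_cancel h).symm

lemma pairs_card_le {n : ℕ} (Λ : Finset (Fin n → ℕ)) (u : Fin n → ℕ) {i : Fin n}
    (hi : u i ≠ 0) :
    ((Λ.erase 0).sym2.filter
      (fun p => Sym2.lift ⟨fun v w => v + w, fun _ _ => add_comm _ _⟩ p = u)).card
      ≤ (reducedSet Λ u (Pi.single i 1)).card + 1 := by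
  set e : Fin n → ℕ := Pi.single i 1 with he
  refine (Finset.card_le_card (t := insert s(e, u - e)
    ((reducedSet Λ u e).image (fun w => s(w, u - w)))) ?_).trans
    ((Finset.card_insert_le _ _).trans (Nat.add_le_add_right Finset.card_image_le 1))
  intro p
  induction p using Sym2.ind with
  | _ v w =>
  simp only [Finset.mem_filter, Finset.mk_mem_sym2_iff, Finset.mem_erase, Sym2.lift_mk,
    Finset.mem_insert, Finset.mem_image]
  rintro ⟨⟨⟨hv0, hv⟩, hw0, hw⟩, hvw⟩
  have h1 : u - v = w := by rw [← hvw]; exact add_tsub_cancel_left v w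
  have h2 : u - w = v := by rw [← hvw]; exact add_tsub_cancel_right v w
  by_cases hve : v = e
  · left; rw [← hve, h1]
  by_cases hwe : w = e
  · left; rw [← hwe, h2, Sym2.eq_swap]
  right
  by_cases hvi : v i = 0
  · have hwi : w i ≠ 0 := by
      have := congrFun hvw i
      simp only [Pi.add_apply] at this
      omega
    exact ⟨v, mem_reducedSet_of_add_eq hv hv0 ((add_comm w v).trans hvw) hwi hve hwe, by rw [h1]⟩
  · exact ⟨w, mem_reducedSet_of_add_eq hw hw0 hvw hvi hwe hve, by rw [h2, Sym2.eq_swap]⟩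

lemma two_mul_card_le_triples {n : ℕ} (Λ : Finset (Fin n → ℕ)) (hΛ : IsOrderIdeal Λ)
    (u : Fin n → ℕ) (hu : u ∈ Λ) {e : Fin n → ℕ} (he0 : e ≠ 0) :
    2 * (reducedSet Λ u e).card ≤
      (((Λ.erase 0) ×ˢ (Λ.erase 0) ×ˢ (Λ.erase 0)).filter
        (fun t => t.1 ≠ t.2.2 ∧ t.1 + t.2.1 + t.2.2 = u)).card := by
  set S := reducedSet Λ u e with hS
  let A := S.image (fun w => (w, u - (w + e), e))
  let B := S.image (fun w => (e, u - (w + e), w))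
  have hA : A.card = S.card :=
    Finset.card_image_of_injective _ (fun a b h => congrArg (fun t => t.1) h)
  have hB : B.card = S.card :=
    Finset.card_image_of_injective _ (fun a b h => congrArg (fun t => t.2.2) h)
  have hdisj : Disjoint A B := by
    rw [Finset.disjoint_left]
    intro t ht ht'
    obtain ⟨w, hw, rfl⟩ := Finset.mem_image.1 ht
    obtain ⟨w', hw', h⟩ := Finset.mem_image.1 ht'
    exact (mem_reducedSet.1 hw).2.2.1 (congrArg (fun t => t.1) h).symm
  rw [two_mul]
  nth_rewrite 1 [← hA]
  rw [← hB, ← Finset.card_union_of_disjoint hdisj]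
  apply Finset.card_le_card
  have key : ∀ w ∈ S, w ∈ Λ.erase 0 ∧ e ∈ Λ.erase 0 ∧ u - (w + e) ∈ Λ.erase 0 ∧ w ≠ e ∧
      w + e + (u - (w + e)) = u := by
    intro w hw
    obtain ⟨hwΛ, hw0, hwe, hle, hne⟩ := mem_reducedSet.1 hw
    have hsum : w + e + (u - (w + e)) = u := add_tsub_cancel_of_le hle
    refine ⟨Finset.mem_erase.2 ⟨hw0, hwΛ⟩, Finset.mem_erase.2 ⟨he0, hΛ u hu e ?_⟩,
      Finset.mem_erase.2 ⟨fun h => hne ?_, hΛ u hu _ tsub_le_self⟩, hwe, hsum⟩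
    · exact le_trans (fun j => Nat.le_add_left _ _) hle
    · rwa [h, add_zero] at hsum
  intro t ht
  rcases Finset.mem_union.1 ht with ht | ht <;> obtain ⟨w, hw, rfl⟩ := Finset.mem_image.1 ht <;>
    obtain ⟨h1, h2, h3, h4, h5⟩ := key w hw
  · refine Finset.mem_filter.2 ⟨Finset.mk_mem_product h1 (Finset.mk_mem_product h3 h2), h4, ?_⟩
    exact (add_right_comm _ _ _).trans h5
  · refine Finset.mem_filter.2 ⟨Finset.mk_mem_product h2 (Finset.mk_mem_product h3 h1), h4.symm, ?_⟩
    rw [add_right_comm, add_comm e w]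
    exact h5

/-- For a finite order ideal `λ ⊆ ℕ^n` and a nonzero `u ∈ λ`,
one has `W_T(u) ≤ W_B(u)`. -/
theorem WT_le_WB {n : ℕ} (Λ : Finset (Fin n → ℕ)) (hΛ : IsOrderIdeal Λ)
    (u : Fin n → ℕ) (hu : u ∈ Λ) (hu0 : u ≠ 0) :
    WT Λ u ≤ (WB Λ u : ℤ) := by
  obtain ⟨i, hi⟩ := Function.ne_iff.1 hu0
  have he0 : (Pi.single i 1 : Fin n → ℕ) ≠ 0 := by simp
  have hP := pairs_card_le Λ u (i := i) hi
  have hT := two_mul_card_le_triples Λ hΛ u hu he0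
  unfold WT WB
  split_ifs
  · positivity
  · omega
end

section
/- Let λ_1 ⊆ λ_2 ⊆ ⋯ ⊆ λ_{r+1} be finite order ideals in ℕ^n with λ_1 = {0}. Then 𝔪 · I_{λ_k} ⊆ I_{λ_{k+1}} holds for all 1 ≤ k ≤ r if and only if for every 1 ≤ k ≤ r, every u ∈ λ_{k+1} ∖ λ_k, and every 1 ≤ i ≤ n, one has u + e_i ∉ λ_{k+1}. (This characterizes which flags of monomial ideals lie in the nilpotently filtered locus of the nested Hilbert scheme.) -/
/-- The monomial `x^u ∈ ℂ[x_1,…,x_n]` associated to an exponent vector `u ∈ ℕ^n`. -/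
noncomputable def mono {n : ℕ} (u : Fin n → ℕ) : MvPolynomial (Fin n) ℂ :=
  MvPolynomial.monomial (Finsupp.equivFunOnFinite.symm u) (1 : ℂ)

/-- The monomial ideal `I_Λ ⊆ ℂ[x_1,…,x_n]` generated by the monomials `x^u` with `u ∉ Λ`. -/
noncomputable def monomialIdeal {n : ℕ} (Λ : Finset (Fin n → ℕ)) :
    Ideal (MvPolynomial (Fin n) ℂ) :=
  Ideal.span {p | ∃ u : Fin n → ℕ, u ∉ Λ ∧ p = mono u}

/-- The maximal ideal `𝔪 = (x_1,…,x_n)` at the origin of `ℂ[x_1,…,x_n]`. -/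
noncomputable def mIdeal (n : ℕ) : Ideal (MvPolynomial (Fin n) ℂ) :=
  Ideal.span (Set.range (MvPolynomial.X : Fin n → MvPolynomial (Fin n) ℂ))

/-- Since `Λ` is an order ideal, its complement is closed under multiples, so the monomials in
`I_Λ` are exactly its generators. -/
theorem mono_mem_monomialIdeal_iff {n : ℕ} {Λ : Finset (Fin n → ℕ)} (hΛ : IsOrderIdeal Λ)
    (u : Fin n → ℕ) : mono u ∈ monomialIdeal Λ ↔ u ∉ Λ := by
  constructor
  · intro h hu
    have hset : {p : MvPolynomial (Fin n) ℂ | ∃ u : Fin n → ℕ, u ∉ Λ ∧ p = mono u} =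
        (fun s => MvPolynomial.monomial s (1 : ℂ)) '' {s : Fin n →₀ ℕ | ⇑s ∉ Λ} := by
      ext p
      constructor
      · rintro ⟨v, hv, rfl⟩
        exact ⟨Finsupp.equivFunOnFinite.symm v, by simpa using hv, rfl⟩
      · rintro ⟨s, hs, rfl⟩
        exact ⟨s, hs, by simp [mono]⟩
    rw [monomialIdeal, hset, MvPolynomial.mem_ideal_span_monomial_image] at h
    obtain ⟨s, hs, hle⟩ := h (Finsupp.equivFunOnFinite.symm u) (by simp [mono])
    exact hs (hΛ u hu s fun i => by simpa using hle i)
  · exact fun h => Ideal.subset_span ⟨u, h, rfl⟩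

theorem X_mul_mono {n : ℕ} (i : Fin n) (u : Fin n → ℕ) :
    MvPolynomial.X i * mono u = mono (u + Pi.single i 1) := by
  rw [mono, mono, MvPolynomial.X, MvPolynomial.monomial_mul, one_mul]
  have hexp : Finsupp.single i 1 + Finsupp.equivFunOnFinite.symm u =
      Finsupp.equivFunOnFinite.symm (u + Pi.single i 1) := by
    ext j
    simp [Finsupp.single_apply, Pi.single_apply, eq_comm, add_comm]
  rw [hexp]

/-- For a flag `λ_1 ⊆ ⋯ ⊆ λ_{r+1}` of finite order ideals with
`λ_1 = {0}` (here `Λ k = λ_{k+1}` for `k : Fin (r+1)`), one has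
`𝔪 · I_{λ_k} ⊆ I_{λ_{k+1}}` for all `1 ≤ k ≤ r` iff for every such `k`, every
`u ∈ λ_{k+1} ∖ λ_k` and every `i`, `u + e_i ∉ λ_{k+1}`.  (This characterizes the flags
of monomial ideals lying in the nilpotently filtered locus.) -/
theorem nil_fil_monomial_characterization {n r : ℕ}
    (Λ : Fin (r + 1) → Finset (Fin n → ℕ))
    (hΛ : ∀ k, IsOrderIdeal (Λ k)) (hmono : Monotone Λ)
    (h0 : Λ 0 = {0}) :
    (∀ k : Fin r, mIdeal n * monomialIdeal (Λ k.castSucc) ≤ monomialIdeal (Λ k.succ)) ↔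
    (∀ k : Fin r, ∀ u ∈ Λ k.succ, u ∉ Λ k.castSucc →
      ∀ i : Fin n, u + Pi.single i 1 ∉ Λ k.succ) := by
  constructor
  · intro h k u _ hu' i
    rw [← mono_mem_monomialIdeal_iff (hΛ _), ← X_mul_mono]
    exact h k (Ideal.mul_mem_mul (Ideal.subset_span ⟨i, rfl⟩)
      (Ideal.subset_span ⟨u, hu', rfl⟩))
  · intro h k
    rw [mIdeal, monomialIdeal, Ideal.span_mul_span', Ideal.span_le]
    rintro _ ⟨_, ⟨i, rfl⟩, _, ⟨u, hu, rfl⟩, rfl⟩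
    change MvPolynomial.X i * mono u ∈ monomialIdeal (Λ k.succ)
    rw [X_mul_mono, mono_mem_monomialIdeal_iff (hΛ _)]
    by_cases hu' : u ∈ Λ k.succ
    · exact h k u hu' hu i
    · exact fun hmem => hu' (hΛ _ _ hmem u le_self_add)
end

section
/- Let R = ℂ[x_1,…,x_n], 𝔪 = (x_1,…,x_n), and let I_{r+1} ⊆ I_r ⊆ ⋯ ⊆ I_1 ⊆ I_0 = R be ideals with dim_ℂ R/I_k = k for all 0 ≤ k ≤ r+1, and suppose there exists m ≥ 0 with 𝔪^m ⊆ I_{r+1} (i.e. all the corresponding subschemes are supported at the origin). Then I_1 = 𝔪, and 𝔪 · I_k ⊆ I_{k+1} for all 0 ≤ k ≤ r. (Consequently, for the full dimension vector (1,1,…,1) the punctual nested Hilbert scheme coincides with the nilpotently filtered locus.) -/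
lemma eq_of_le_of_finrank_quotient_eq {A : Type*} [CommRing A] [Algebra ℂ A] {J L : Ideal A}
    (h : J ≤ L) [FiniteDimensional ℂ (A ⧸ J)]
    (hd : Module.finrank ℂ (A ⧸ J) = Module.finrank ℂ (A ⧸ L)) : J = L := by
  have hs : Function.Surjective (Ideal.Quotient.factorₐ ℂ h).toLinearMap :=
    Ideal.Quotient.factor_surjective h
  have : FiniteDimensional ℂ (A ⧸ L) := Module.Finite.of_surjective _ hs
  have hi := (LinearMap.injective_iff_surjective_of_finrank_eq_finrank hd).2 hs
  refine le_antisymm h fun x hx => ?_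
  rw [← Ideal.Quotient.eq_zero_iff_mem] at hx ⊢
  exact hi (by simpa using hx)

lemma finrank_quotient_le_of_le {A : Type*} [CommRing A] [Algebra ℂ A] {J L : Ideal A}
    (h : J ≤ L) [FiniteDimensional ℂ (A ⧸ J)] :
    Module.finrank ℂ (A ⧸ L) ≤ Module.finrank ℂ (A ⧸ J) :=
  LinearMap.finrank_le_finrank_of_surjective (f := (Ideal.Quotient.factorₐ ℂ h).toLinearMap)
    (Ideal.Quotient.factor_surjective h)

/-- Nakayama's lemma for an ideal `M` that is nilpotent modulo `J`. -/
lemma le_of_le_sup_mul_of_pow_le {A : Type*} [CommRing A] {J K M : Ideal A} {m : ℕ}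
    (hm : M ^ m ≤ J) (h : K ≤ J ⊔ M * K) : K ≤ J := by
  have key : ∀ i : ℕ, K ≤ J ⊔ M ^ i * K := by
    intro i
    induction i with
    | zero => simp
    | succ i ih =>
      calc K ≤ J ⊔ M * K := h
        _ ≤ J ⊔ M * (J ⊔ M ^ i * K) := sup_le_sup_left (Ideal.mul_mono_right ih) _
        _ ≤ J ⊔ M ^ (i + 1) * K := by
          have hJ : M * J ≤ J := Ideal.mul_le_right
          rw [Ideal.mul_sup, ← mul_assoc, ← pow_succ']
          exact sup_le le_sup_left (sup_le (le_sup_of_le_left hJ) le_sup_right)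
  have hK : M ^ m * K ≤ M ^ m := Ideal.mul_le_left
  exact (key m).trans (sup_le le_rfl (hK.trans hm))

lemma sub_C_constantCoeff_mem_mIdeal {n : ℕ} (f : MvPolynomial (Fin n) ℂ) :
    f - MvPolynomial.C (MvPolynomial.constantCoeff f) ∈ mIdeal n := by
  induction f using MvPolynomial.induction_on with
  | C a => simp
  | add p q hp hq =>
    have := add_mem hp hq
    simp only [map_add]
    convert this using 1
    ring
  | mul_X p i _ =>
    simp only [map_mul, MvPolynomial.constantCoeff_X, mul_zero, map_zero, sub_zero]
    exact Ideal.mul_mem_left _ _ (Ideal.subset_span ⟨i, rfl⟩)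

lemma eq_mIdeal_of_le {n : ℕ} {J : Ideal (MvPolynomial (Fin n) ℂ)} (h : mIdeal n ≤ J)
    (hJ : J ≠ ⊤) : J = mIdeal n := by
  refine le_antisymm (fun f hf => ?_) h
  have h1 := sub_C_constantCoeff_mem_mIdeal f
  have h2 : MvPolynomial.C (MvPolynomial.constantCoeff f) ∈ J := by
    simpa using sub_mem hf (h h1)
  by_cases hc : MvPolynomial.constantCoeff f = 0
  · simpa [hc] using h1
  · exact absurd (Ideal.eq_top_of_isUnit_mem _ h2 ((IsUnit.mk0 _ hc).map MvPolynomial.C)) hJ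

/-- Let `I_{r+1} ⊆ I_r ⊆ ⋯ ⊆ I_1 ⊆ I_0 = ℂ[x_1,…,x_n]` be ideals with
`dim_ℂ R/I_k = k` for all `k`, and suppose `𝔪^m ⊆ I_{r+1}` for some `m` (i.e. all the
corresponding subschemes are supported at the origin).  Then `I_1 = 𝔪` and
`𝔪 · I_k ⊆ I_{k+1}` for all `0 ≤ k ≤ r`: for the full dimension vector, the punctual
nested Hilbert scheme coincides with the nilpotently filtered locus. -/
theorem punctual_full_flag_is_nil_fil {n r : ℕ}
    (I : Fin (r + 2) → Ideal (MvPolynomial (Fin n) ℂ))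
    (hanti : Antitone I) (h0 : I 0 = ⊤)
    (hdim : ∀ k : Fin (r + 2),
      Module.finrank ℂ (MvPolynomial (Fin n) ℂ ⧸ I k) = (k : ℕ))
    (hsupp : ∃ m : ℕ, mIdeal n ^ m ≤ I (Fin.last (r + 1))) :
    I 1 = mIdeal n ∧ ∀ k : Fin (r + 1), mIdeal n * I k.castSucc ≤ I k.succ := by
  obtain ⟨m, hm⟩ := hsupp
  have hmul : ∀ k : Fin (r + 1), mIdeal n * I k.castSucc ≤ I k.succ := by
    intro k
    have hJK : I k.succ ≤ I k.castSucc := hanti (Fin.castSucc_le_succ k)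
    have hdJ := hdim k.succ
    have hdK := hdim k.castSucc
    rw [Fin.val_succ] at hdJ
    rw [Fin.val_castSucc] at hdK
    have : FiniteDimensional ℂ (MvPolynomial (Fin n) ℂ ⧸ I k.succ) :=
      FiniteDimensional.of_finrank_pos (by omega)
    have hJL : I k.succ ≤ I k.succ ⊔ mIdeal n * I k.castSucc := le_sup_left
    have hLK : I k.succ ⊔ mIdeal n * I k.castSucc ≤ I k.castSucc :=
      sup_le hJK Ideal.mul_le_right
    have : FiniteDimensional ℂ
        (MvPolynomial (Fin n) ℂ ⧸ (I k.succ ⊔ mIdeal n * I k.castSucc)) :=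
      Module.Finite.of_surjective (Ideal.Quotient.factorₐ ℂ hJL).toLinearMap
        (Ideal.Quotient.factor_surjective hJL)
    have h1 := finrank_quotient_le_of_le hJL
    have h2 := finrank_quotient_le_of_le hLK
    by_cases hd : Module.finrank ℂ
        (MvPolynomial (Fin n) ℂ ⧸ (I k.succ ⊔ mIdeal n * I k.castSucc)) = k
    · exfalso
      have hL := eq_of_le_of_finrank_quotient_eq hLK (hd.trans hdK.symm)
      have hKJ : I k.castSucc ≤ I k.succ :=
        le_of_le_sup_mul_of_pow_le (hm.trans (hanti (Fin.le_last _))) hL.ge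
      rw [le_antisymm hKJ hJK] at hdK
      omega
    · have hL := eq_of_le_of_finrank_quotient_eq hJL (by omega)
      exact le_sup_right.trans hL.ge
  refine ⟨eq_mIdeal_of_le ?_ fun htop => ?_, hmul⟩
  · have h := hmul 0
    rwa [Fin.castSucc_zero, h0, Ideal.mul_top, Fin.succ_zero_eq_one] at h
  · have h := hdim 1
    rw [htop, ← h0, hdim 0] at h
    simp at h
end

section
/- Let λ ⊆ ℕ^n be a finite order ideal of cardinality d with an admissible enumeration u_0, …, u_{d−1}, and let w be the weight function of a dimension vector (d_0,…,d_r) with d_0 + ⋯ + d_r = d. Then #{(i,k) : 1 ≤ i ≤ n, 0 ≤ k ≤ d−1, u_k = e_i} + #{(i,j,k) : 1 ≤ i ≤ j ≤ d−1, 0 ≤ k ≤ d−1, w(j) ≤ w(k), u_i + u_j = u_k} − #{(j,k) : 1 ≤ j ≤ d−1, 0 ≤ k ≤ d−1, w(j) ≤ w(k), u_j = u_k} = Σ_{m=1}^{d−1} W_T(u_m). In particular this quantity (the rank of the torus-fixed part of the tangent space of the non-associative nested Hilbert scheme at the fixed point λ) depends only on λ, not on the dimension vector or the enumeration. -/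
/-- The weight function of a dimension vector `(d_0, …, d_r)`:
`wt D k = i` exactly when `d_0 + ⋯ + d_{i−1} ≤ k < d_0 + ⋯ + d_i`; equivalently it is the
number of indices `i` with `d_0 + ⋯ + d_i ≤ k`. -/
def wt {r : ℕ} (D : Fin (r + 1) → ℕ) (k : ℕ) : ℕ :=
  (Finset.univ.filter (fun i : Fin (r + 1) => ∑ j ∈ Finset.Iic i, D j ≤ k)).card

theorem wt_mono {r : ℕ} (D : Fin (r + 1) → ℕ) {a b : ℕ} (h : a ≤ b) : wt D a ≤ wt D b :=
  Finset.card_le_card (Finset.monotone_filter_right _ fun _ _ hi => le_trans hi h)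

theorem add_ne_single {n : ℕ} {v w : Fin n → ℕ} (hv : v ≠ 0) (hw : w ≠ 0) (i : Fin n) :
    v + w ≠ Pi.single i 1 := by
  intro h
  obtain ⟨a, ha⟩ := Function.ne_iff.mp hv
  obtain ⟨b, hb⟩ := Function.ne_iff.mp hw
  have h1 := congrFun h a
  have h2 := congrFun h b
  simp only [Pi.add_apply, Pi.single_apply, Pi.zero_apply] at *
  -- both supports lie in `{i}`, so the `i`-th coordinate of the sum is at least `2`
  have hai : a = i := by by_contra hne; rw [if_neg hne] at h1; omega
  have hbi : b = i := by by_contra hne; rw [if_neg hne] at h2; omega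
  subst hai
  subst hbi
  simp only [if_true] at h1
  omega

/-- An admissible enumeration is a linear extension of the coordinatewise order. -/
theorem index_le_of_le {n d : ℕ} {u : Fin d → (Fin n → ℕ)} (hinj : Function.Injective u)
    (hprefix : ∀ k j : Fin d, j ≤ k → ∀ v : Fin n → ℕ, v ≤ u j →
      ∃ i : Fin d, i ≤ k ∧ u i = v) {j k : Fin d} (h : u j ≤ u k) : j ≤ k := by
  obtain ⟨i, hi, hij⟩ := hprefix k k le_rfl (u j) h
  exact hinj hij ▸ hi

theorem ne_zero_iff_one_le_index {n d : ℕ} {u : Fin d → (Fin n → ℕ)} (hinj : Function.Injective u)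
    (hprefix : ∀ k j : Fin d, j ≤ k → ∀ v : Fin n → ℕ, v ≤ u j →
      ∃ i : Fin d, i ≤ k ∧ u i = v) (k : Fin d) : u k ≠ 0 ↔ 1 ≤ (k : ℕ) := by
  have hd : 0 < d := k.pos
  obtain ⟨i, hi, hi0⟩ := hprefix ⟨0, hd⟩ ⟨0, hd⟩ le_rfl 0 (fun _ => Nat.zero_le _)
  have hiv : (i : ℕ) = 0 := Nat.le_zero.mp hi
  rw [← hi0, hinj.ne_iff, Ne, Fin.ext_iff]
  omega

/-- Triples `(i, j, m)` of the second count with last index `m` correspond to unordered pairs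
`{u_i, u_j}`: the condition `i ≤ j` selects one ordering of each pair. -/
theorem card_triples_eq {n d r : ℕ} (Λ : Finset (Fin n → ℕ)) (u : Fin d → (Fin n → ℕ))
    (hinj : Function.Injective u) (hmem : ∀ i, u i ∈ Λ) (hsurj : ∀ a ∈ Λ, ∃ i, u i = a)
    (hprefix : ∀ k j : Fin d, j ≤ k → ∀ v : Fin n → ℕ, v ≤ u j →
      ∃ i : Fin d, i ≤ k ∧ u i = v)
    (D : Fin (r + 1) → ℕ) (m : Fin d) :
    (((Finset.univ : Finset (Fin d × Fin d × Fin d)).filter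
        (fun t => 1 ≤ (t.1 : ℕ) ∧ (t.1 : ℕ) ≤ (t.2.1 : ℕ) ∧
          wt D (t.2.1 : ℕ) ≤ wt D (t.2.2 : ℕ) ∧ u t.1 + u t.2.1 = u t.2.2)).filter
        (fun t => t.2.2 = m)).card
    = ((Λ.erase 0).sym2.filter
      (fun p => Sym2.lift ⟨fun v w => v + w, fun _ _ => add_comm _ _⟩ p = u m)).card := by
  have h0 := ne_zero_iff_one_le_index hinj hprefix
  refine Finset.card_bij (fun t _ => s(u t.1, u t.2.1)) ?_ ?_ ?_
  · rintro ⟨i, j, k⟩ ht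
    simp only [Finset.mem_filter, Finset.mem_univ, true_and] at ht
    obtain ⟨⟨hi, hij, -, hs⟩, rfl⟩ := ht
    simp only [Finset.mem_filter, Finset.mk_mem_sym2_iff, Finset.mem_erase, Sym2.lift_mk]
    exact ⟨⟨⟨(h0 i).2 hi, hmem i⟩, ⟨(h0 j).2 (hi.trans hij), hmem j⟩⟩, hs⟩
  · rintro ⟨i, j, k⟩ ht ⟨i', j', k'⟩ ht' he
    simp only [Finset.mem_filter, Finset.mem_univ, true_and] at ht ht'
    obtain ⟨⟨-, hij, -, -⟩, rfl⟩ := ht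
    obtain ⟨⟨-, hij', -, -⟩, rfl⟩ := ht'
    simp only [Sym2.eq_iff, hinj.eq_iff] at he
    rcases he with ⟨rfl, rfl⟩ | ⟨rfl, rfl⟩
    · rfl
    · obtain rfl : i = j := Fin.ext (le_antisymm hij hij')
      rfl
  · intro p
    induction p using Sym2.ind with
    | _ v w =>
      intro hp
      simp only [Finset.mem_filter, Finset.mk_mem_sym2_iff, Finset.mem_erase,
        Sym2.lift_mk] at hp
      obtain ⟨⟨⟨hv0, hv⟩, ⟨hw0, hw⟩⟩, hs⟩ := hp
      obtain ⟨i, rfl⟩ := hsurj v hv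
      obtain ⟨j, rfl⟩ := hsurj w hw
      have him : i ≤ m := index_le_of_le hinj hprefix (hs ▸ le_self_add)
      have hjm : j ≤ m := index_le_of_le hinj hprefix (hs ▸ le_add_self)
      rcases le_total i j with hij | hij
      · refine ⟨(i, j, m), ?_, rfl⟩
        simp only [Finset.mem_filter, Finset.mem_univ, true_and, and_true]
        exact ⟨(h0 i).1 hv0, hij, wt_mono D hjm, hs⟩
      · refine ⟨(j, i, m), ?_, Sym2.eq_swap⟩
        simp only [Finset.mem_filter, Finset.mem_univ, true_and, and_true]
        exact ⟨(h0 j).1 hw0, hij, wt_mono D him, by rw [add_comm]; exact hs⟩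

/-- For a finite order ideal `λ ⊆ ℕ^n` of cardinality `d` with an
admissible enumeration `u_0, …, u_{d−1}` and the weight function `w` of a dimension
vector `(d_0, …, d_r)` with `d_0 + ⋯ + d_r = d`:
`#{(i,k) : u_k = e_i} + #{(i,j,k) : 1 ≤ i ≤ j, w(j) ≤ w(k), u_i + u_j = u_k}
  − #{(j,k) : 1 ≤ j, w(j) ≤ w(k), u_j = u_k} = Σ_{m=1}^{d−1} W_T(u_m)`.
In particular this rank of the fixed part of the tangent space depends only on `λ`. -/
theorem tangent_fixed_rank_eq {n d r : ℕ}
    (Λ : Finset (Fin n → ℕ)) (hΛ : IsOrderIdeal Λ) (hcard : Λ.card = d)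
    (u : Fin d → (Fin n → ℕ))
    (hinj : Function.Injective u)
    (hmem : ∀ i, u i ∈ Λ)
    (hsurj : ∀ a ∈ Λ, ∃ i, u i = a)
    (hprefix : ∀ k j : Fin d, j ≤ k → ∀ v : Fin n → ℕ, v ≤ u j →
      ∃ i : Fin d, i ≤ k ∧ u i = v)
    (D : Fin (r + 1) → ℕ) (hD : ∑ i, D i = d) :
    (((Finset.univ : Finset (Fin n × Fin d)).filter
        (fun p => u p.2 = Pi.single p.1 1)).card : ℤ)
      + (((Finset.univ : Finset (Fin d × Fin d × Fin d)).filter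
        (fun t => 1 ≤ (t.1 : ℕ) ∧ (t.1 : ℕ) ≤ (t.2.1 : ℕ) ∧
          wt D (t.2.1 : ℕ) ≤ wt D (t.2.2 : ℕ) ∧ u t.1 + u t.2.1 = u t.2.2)).card : ℤ)
      - (((Finset.univ : Finset (Fin d × Fin d)).filter
        (fun p => 1 ≤ (p.1 : ℕ) ∧ wt D (p.1 : ℕ) ≤ wt D (p.2 : ℕ) ∧
          u p.1 = u p.2)).card : ℤ)
    = ∑ m ∈ Finset.univ.filter (fun m : Fin d => 1 ≤ (m : ℕ)), WT Λ (u m) := by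
  have h0 := ne_zero_iff_one_le_index hinj hprefix
  rw [Finset.card_eq_sum_card_fiberwise (f := fun p : Fin n × Fin d => p.2)
      (t := Finset.univ.filter (fun m : Fin d => 1 ≤ (m : ℕ))),
    Finset.card_eq_sum_card_fiberwise (f := fun t : Fin d × Fin d × Fin d => t.2.2)
      (t := Finset.univ.filter (fun m : Fin d => 1 ≤ (m : ℕ))),
    Finset.card_eq_sum_card_fiberwise (f := fun p : Fin d × Fin d => p.2)
      (t := Finset.univ.filter (fun m : Fin d => 1 ≤ (m : ℕ)))]
  · push_cast
    rw [← Finset.sum_add_distrib, ← Finset.sum_sub_distrib]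
    refine Finset.sum_congr rfl fun m hm => ?_
    have hm1 : 1 ≤ (m : ℕ) := (Finset.mem_filter.1 hm).2
    rw [card_triples_eq Λ u hinj hmem hsurj hprefix D m]
    have h3 : (((Finset.univ : Finset (Fin d × Fin d)).filter
        (fun p => 1 ≤ (p.1 : ℕ) ∧ wt D (p.1 : ℕ) ≤ wt D (p.2 : ℕ) ∧
          u p.1 = u p.2)).filter (fun p => p.2 = m)).card = 1 := by
      rw [Finset.card_eq_one]
      refine ⟨(m, m), ?_⟩
      ext ⟨j, k⟩
      simp only [Finset.mem_filter, Finset.mem_univ, true_and, Finset.mem_singleton,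
        Prod.mk.injEq, hinj.eq_iff]
      constructor
      · rintro ⟨⟨-, -, rfl⟩, rfl⟩
        exact ⟨rfl, rfl⟩
      · rintro ⟨rfl, rfl⟩
        exact ⟨⟨hm1, le_rfl, rfl⟩, rfl⟩
    rw [h3]
    unfold WT
    split_ifs with hu
    · obtain ⟨i, hi⟩ := hu
      have h1 : (((Finset.univ : Finset (Fin n × Fin d)).filter
          (fun p => u p.2 = Pi.single p.1 1)).filter (fun p => p.2 = m)).card = 1 := by
        rw [Finset.card_eq_one]
        refine ⟨(i, m), ?_⟩
        ext ⟨j, k⟩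
        simp only [Finset.mem_filter, Finset.mem_univ, true_and, Finset.mem_singleton,
          Prod.mk.injEq]
        constructor
        · rintro ⟨hj, rfl⟩
          refine ⟨?_, rfl⟩
          by_contra hne
          have := congrFun (hi.symm.trans hj) j
          simp [hne] at this
        · rintro ⟨rfl, rfl⟩
          exact ⟨hi, rfl⟩
      have h2 : ((Λ.erase 0).sym2.filter (fun p =>
          Sym2.lift ⟨fun v w => v + w, fun _ _ => add_comm _ _⟩ p = u m)).card = 0 := by
        rw [Finset.card_eq_zero, Finset.filter_eq_empty_iff]
        intro p
        induction p using Sym2.ind with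
        | _ v w =>
          intro hp
          simp only [Finset.mk_mem_sym2_iff, Finset.mem_erase] at hp
          rw [Sym2.lift_mk, hi]
          exact add_ne_single hp.1.1 hp.2.1 i
      rw [h1, h2]
      norm_num
    · have h1 : (((Finset.univ : Finset (Fin n × Fin d)).filter
          (fun p => u p.2 = Pi.single p.1 1)).filter (fun p => p.2 = m)).card = 0 := by
        rw [Finset.card_eq_zero, Finset.filter_eq_empty_iff]
        rintro ⟨j, k⟩ hp rfl
        exact hu ⟨j, (Finset.mem_filter.1 hp).2⟩
      rw [h1]
      norm_num
  -- the remaining goals: in each of the three counts the index `k` is at least `1`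
  · rintro ⟨j, k⟩ hp
    simp only [Finset.coe_filter, Finset.mem_univ, true_and, Set.mem_ofPred_eq] at hp ⊢
    exact hinj hp.2.2 ▸ hp.1
  · rintro ⟨i, j, k⟩ hp
    simp only [Finset.coe_filter, Finset.mem_univ, true_and, Set.mem_ofPred_eq] at hp ⊢
    have hik : i ≤ k := index_le_of_le hinj hprefix (hp.2.2.2 ▸ le_self_add)
    exact hp.1.trans hik
  · rintro ⟨i, k⟩ hp
    simp only [Finset.coe_filter, Finset.mem_univ, true_and, Set.mem_ofPred_eq] at hp ⊢
    rw [← h0, hp]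
    simp
end

section
/- Let λ ⊆ ℕ^n be a finite order ideal of cardinality d with an admissible enumeration u_0, …, u_{d−1}, and let w be the weight function of a dimension vector (d_0,…,d_r) with d_0 + ⋯ + d_r = d. Then #{(i,j,k,m) : 1 ≤ i,j,k ≤ d−1, i < k, 0 ≤ m ≤ d−1, w(j) ≤ w(m), w(k) ≤ w(m), u_i + u_j + u_k = u_m} = Σ_{m=1}^{d−1} W_B(u_m). In particular this quantity (the rank of the torus-fixed part of the associativity bundle at the fixed point λ) depends only on λ, not on the dimension vector or the enumeration. -/
theorem wt_mono_s14 {r : ℕ} (D : Fin (r + 1) → ℕ) : Monotone (wt D) := by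
  intro a b hab
  unfold wt
  apply Finset.card_le_card
  intro i hi
  simp only [Finset.mem_filter, Finset.mem_univ, true_and] at hi ⊢
  exact hi.trans hab

/-- `WB` in terms of an enumeration of `Λ` whose only zero entry has index `0`: the factor `1/2`
amounts to ordering the two outer indices. -/
theorem WB_eq_card {n d : ℕ} (Λ : Finset (Fin n → ℕ)) (u : Fin d → (Fin n → ℕ))
    (hinj : Function.Injective u) (hmem : ∀ i, u i ∈ Λ) (hsurj : ∀ a ∈ Λ, ∃ i, u i = a)
    (h0 : ∀ i : Fin d, 1 ≤ (i : ℕ) ↔ u i ≠ 0) (x : Fin n → ℕ) :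
    WB Λ x = ((Finset.univ : Finset (Fin d × Fin d × Fin d)).filter
      (fun t => (1 ≤ (t.1 : ℕ) ∧ 1 ≤ (t.2.1 : ℕ) ∧ 1 ≤ (t.2.2 : ℕ) ∧
        u t.1 + u t.2.1 + u t.2.2 = x) ∧ t.1 < t.2.2)).card := by
  set P : Fin d × Fin d × Fin d → Prop := fun t => 1 ≤ (t.1 : ℕ) ∧ 1 ≤ (t.2.1 : ℕ) ∧
    1 ≤ (t.2.2 : ℕ) ∧ u t.1 + u t.2.1 + u t.2.2 = x with hP
  have hbij : ((Finset.univ : Finset (Fin d × Fin d × Fin d)).filter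
      (fun t => P t ∧ t.1 ≠ t.2.2)).card =
      (((Λ.erase 0) ×ˢ (Λ.erase 0) ×ˢ (Λ.erase 0)).filter
        (fun t => t.1 ≠ t.2.2 ∧ t.1 + t.2.1 + t.2.2 = x)).card := by
    apply Finset.card_bij (fun t _ => (u t.1, u t.2.1, u t.2.2))
    · rintro ⟨i, j, k⟩ h
      simp only [hP, h0, Finset.mem_filter, Finset.mem_univ, true_and] at h
      simp only [Finset.mem_filter, Finset.mem_product, Finset.mem_erase]
      exact ⟨⟨⟨h.1.1, hmem i⟩, ⟨h.1.2.1, hmem j⟩, ⟨h.1.2.2.1, hmem k⟩⟩,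
        hinj.ne h.2, h.1.2.2.2⟩
    · rintro ⟨i, j, k⟩ _ ⟨i', j', k'⟩ _ h
      simp only [Prod.mk.injEq, hinj.eq_iff] at h ⊢
      exact h
    · rintro ⟨a, b, c⟩ h
      simp only [Finset.mem_filter, Finset.mem_product, Finset.mem_erase] at h
      obtain ⟨⟨⟨ha0, ha⟩, ⟨hb0, hb⟩, ⟨hc0, hc⟩⟩, hne, hsum⟩ := h
      obtain ⟨i, rfl⟩ := hsurj a ha
      obtain ⟨j, rfl⟩ := hsurj b hb
      obtain ⟨k, rfl⟩ := hsurj c hc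
      refine ⟨(i, j, k), ?_, rfl⟩
      simp only [hP, h0, Finset.mem_filter, Finset.mem_univ, true_and]
      exact ⟨⟨ha0, hb0, hc0, hsum⟩, fun h => hne (congrArg u h)⟩
  have hswap : ((Finset.univ : Finset (Fin d × Fin d × Fin d)).filter
      (fun t => P t ∧ t.1 < t.2.2)).card =
      ((Finset.univ : Finset (Fin d × Fin d × Fin d)).filter
      (fun t => P t ∧ t.2.2 < t.1)).card := by
    have hPs : ∀ i j k, P (i, j, k) → P (k, j, i) := by
      rintro i j k ⟨h1, h2, h3, h4⟩
      refine ⟨h3, h2, h1, ?_⟩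
      rw [← h4]
      simp only
      abel
    refine Finset.card_bij' (fun t _ => (t.2.2, t.2.1, t.1)) (fun t _ => (t.2.2, t.2.1, t.1))
      ?_ ?_ ?_ ?_
    · rintro ⟨i, j, k⟩ h
      simp only [Finset.mem_filter, Finset.mem_univ, true_and] at h ⊢
      exact ⟨hPs _ _ _ h.1, h.2⟩
    · rintro ⟨i, j, k⟩ h
      simp only [Finset.mem_filter, Finset.mem_univ, true_and] at h ⊢
      exact ⟨hPs _ _ _ h.1, h.2⟩
    · intros; rfl
    · intros; rfl
  have hsplit : ((Finset.univ : Finset (Fin d × Fin d × Fin d)).filter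
      (fun t => P t ∧ t.1 ≠ t.2.2)).card =
      ((Finset.univ : Finset (Fin d × Fin d × Fin d)).filter
      (fun t => P t ∧ t.1 < t.2.2)).card +
      ((Finset.univ : Finset (Fin d × Fin d × Fin d)).filter
      (fun t => P t ∧ t.2.2 < t.1)).card := by
    rw [← Finset.card_union_of_disjoint]
    · congr 1
      ext t
      simp only [Finset.mem_filter, Finset.mem_univ, true_and, Finset.mem_union,
        ← and_or_left, lt_or_lt_iff_ne]
    · rw [Finset.disjoint_filter]
      rintro t _ ⟨_, h⟩ ⟨_, h'⟩
      exact lt_asymm h h'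
  change WB Λ x = ((Finset.univ : Finset (Fin d × Fin d × Fin d)).filter
      (fun t => P t ∧ t.1 < t.2.2)).card
  unfold WB
  omega

/-- For a finite order ideal `λ ⊆ ℕ^n` of cardinality `d` with an
admissible enumeration `u_0, …, u_{d−1}` and the weight function `w` of a dimension
vector `(d_0, …, d_r)` with `d_0 + ⋯ + d_r = d`:
`#{(i,j,k,m) : 1 ≤ i,j,k ≤ d−1, i < k, w(j) ≤ w(m), w(k) ≤ w(m), u_i + u_j + u_k = u_m}
  = Σ_{m=1}^{d−1} W_B(u_m)`.
In particular this rank of the fixed part of the associativity bundle depends only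
on `λ`. -/
theorem associativity_fixed_rank_eq {n d r : ℕ}
    (Λ : Finset (Fin n → ℕ)) (hΛ : IsOrderIdeal Λ) (hcard : Λ.card = d)
    (u : Fin d → (Fin n → ℕ))
    (hinj : Function.Injective u)
    (hmem : ∀ i, u i ∈ Λ)
    (hsurj : ∀ a ∈ Λ, ∃ i, u i = a)
    (hprefix : ∀ k j : Fin d, j ≤ k → ∀ v : Fin n → ℕ, v ≤ u j →
      ∃ i : Fin d, i ≤ k ∧ u i = v)
    (D : Fin (r + 1) → ℕ) (hD : ∑ i, D i = d) :
    ((Finset.univ : Finset (Fin d × Fin d × Fin d × Fin d)).filter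
        (fun t => 1 ≤ (t.1 : ℕ) ∧ 1 ≤ (t.2.1 : ℕ) ∧ 1 ≤ (t.2.2.1 : ℕ) ∧
          t.1 < t.2.2.1 ∧
          wt D (t.2.1 : ℕ) ≤ wt D (t.2.2.2 : ℕ) ∧
          wt D (t.2.2.1 : ℕ) ≤ wt D (t.2.2.2 : ℕ) ∧
          u t.1 + u t.2.1 + u t.2.2.1 = u t.2.2.2)).card
    = ∑ m ∈ Finset.univ.filter (fun m : Fin d => 1 ≤ (m : ℕ)), WB Λ (u m) := by
  have h0 : ∀ i : Fin d, 1 ≤ (i : ℕ) ↔ u i ≠ 0 := by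
    intro i
    have hd : 0 < d := i.pos
    have hz : u ⟨0, hd⟩ = 0 := by
      obtain ⟨j, hj, hj0⟩ := hprefix ⟨0, hd⟩ ⟨0, hd⟩ le_rfl 0 zero_le
      have : j = ⟨0, hd⟩ := Fin.ext (Nat.le_zero.mp hj)
      rwa [this] at hj0
    rw [← hz, hinj.ne_iff, Ne, Fin.ext_iff]
    simp only
    omega
  have hle : ∀ j m : Fin d, u j ≤ u m → wt D (j : ℕ) ≤ wt D (m : ℕ) := by
    intro j m h
    obtain ⟨i, hi, hij⟩ := hprefix m m le_rfl (u j) h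
    rw [← hinj hij]
    exact wt_mono_s14 D hi
  rw [Finset.card_eq_sum_card_fiberwise (f := fun t => t.2.2.2)
    (t := Finset.univ.filter (fun m : Fin d => 1 ≤ (m : ℕ)))]
  · refine Finset.sum_congr rfl fun m _ => ?_
    rw [WB_eq_card Λ u hinj hmem hsurj h0]
    refine Finset.card_bij' (fun t _ => (t.1, t.2.1, t.2.2.1))
      (fun t _ => (t.1, t.2.1, t.2.2, m)) ?_ ?_ ?_ ?_
    · rintro ⟨i, j, k, m'⟩ h
      simp only [Finset.mem_filter, Finset.mem_univ, true_and] at h ⊢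
      obtain ⟨⟨h1, h2, h3, h4, -, -, h5⟩, rfl⟩ := h
      exact ⟨⟨h1, h2, h3, h5⟩, h4⟩
    · rintro ⟨i, j, k⟩ h
      simp only [Finset.mem_filter, Finset.mem_univ, true_and, and_true] at h ⊢
      obtain ⟨⟨h1, h2, h3, h5⟩, h4⟩ := h
      refine ⟨h1, h2, h3, h4, hle _ _ ?_, hle _ _ ?_, h5⟩
      · rw [← h5]
        exact le_add_right le_add_self
      · rw [← h5]
        exact le_add_self
    · rintro ⟨i, j, k, m'⟩ h
      simp only [Finset.mem_filter, Finset.mem_univ, true_and] at h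
      rw [← h.2]
    · intros; rfl
  · rintro ⟨i, j, k, m⟩ h
    simp only [Finset.coe_filter, Finset.mem_univ, true_and, Set.mem_ofPred_eq] at h ⊢
    obtain ⟨h1, -, -, -, -, -, h5⟩ := h
    -- `u m = 0` would force `u i = 0`, as all entries are natural numbers.
    rw [h0] at h1 ⊢
    intro hm
    apply h1
    apply le_antisymm _ zero_le
    rw [← hm, ← h5, add_assoc]
    exact le_self_add
end

section
/- Let s₁, s₂, s₃ be elements of a field of characteristic zero such that s_i ≠ 0 for all i, and s_i ≠ s_j and s_i ≠ 2·s_j for all i ≠ j. Then Σ_{i=1}^{3} 80·s_i⁶ / (s_j·(s_j − s_i)·(s_j − 2s_i)·s_k·(s_k − s_i)·(s_k − 2s_i)) (where {j,k} = {1,2,3}∖{i}) + Σ_{1 ≤ i < j ≤ 3} (2s_i + s_j)·(s_i + 2s_j)·(s_i + s_j)·s_i·s_j / ((2s_i − s_j)·(2s_j − s_i)·s_k·(s_k − s_i)·(s_k − s_j)) (where k is the remaining index) = 20·(s₁+s₂+s₃)³/(s₁s₂s₃) − 31·(s₁s₂+s₁s₃+s₂s₃)·(s₁+s₂+s₃)/(s₁s₂s₃)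 + 11. In particular, if additionally s₁+s₂+s₃ = 0, the left-hand side equals 11. -/
/-!
The hypotheses make all denominators nonzero, so the first equation becomes a polynomial identity
over the common denominator `s₁ s₂ s₃ ∏_{i<j} (sᵢ - sⱼ) ∏_{i≠j} (sᵢ - 2 sⱼ)`, which holds by
expansion. Both non-constant terms of its right-hand side contain the factor `s₁ + s₂ + s₃`, which
gives the value `11` when that sum vanishes.
-/

/-- The torus-localization evaluation of the virtual integral of
`c₂(𝒪^[3])³` over `Hilb³(𝔸³)`: for `s₁, s₂, s₃` in a field of characteristic zero with
`s_i ≠ 0`, `s_i ≠ s_j` and `s_i ≠ 2 s_j` for `i ≠ j`, the sum of the fixed-point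
contributions of the partitions `{0, e_i, 2e_i}` and `{0, e_i, e_j}` equals
`20 (s₁+s₂+s₃)³/(s₁s₂s₃) − 31 (s₁s₂+s₁s₃+s₂s₃)(s₁+s₂+s₃)/(s₁s₂s₃) + 11`; in particular
it equals `11` on the Calabi–Yau locus `s₁+s₂+s₃ = 0`. -/
theorem hilb3_virtual_integral {K : Type*} [Field K] [CharZero K]
    (s₁ s₂ s₃ : K)
    (h₁ : s₁ ≠ 0) (h₂ : s₂ ≠ 0) (h₃ : s₃ ≠ 0)
    (h₁₂ : s₁ ≠ s₂) (h₁₃ : s₁ ≠ s₃) (h₂₃ : s₂ ≠ s₃)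
    (g₁₂ : s₁ ≠ 2 * s₂) (g₂₁ : s₂ ≠ 2 * s₁)
    (g₁₃ : s₁ ≠ 2 * s₃) (g₃₁ : s₃ ≠ 2 * s₁)
    (g₂₃ : s₂ ≠ 2 * s₃) (g₃₂ : s₃ ≠ 2 * s₂) :
    (80 * s₁ ^ 6 / (s₂ * (s₂ - s₁) * (s₂ - 2 * s₁) * s₃ * (s₃ - s₁) * (s₃ - 2 * s₁)) +
     80 * s₂ ^ 6 / (s₁ * (s₁ - s₂) * (s₁ - 2 * s₂) * s₃ * (s₃ - s₂) * (s₃ - 2 * s₂)) +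
     80 * s₃ ^ 6 / (s₁ * (s₁ - s₃) * (s₁ - 2 * s₃) * s₂ * (s₂ - s₃) * (s₂ - 2 * s₃)) +
     (2 * s₁ + s₂) * (s₁ + 2 * s₂) * (s₁ + s₂) * s₁ * s₂ /
       ((2 * s₁ - s₂) * (2 * s₂ - s₁) * s₃ * (s₃ - s₁) * (s₃ - s₂)) +
     (2 * s₁ + s₃) * (s₁ + 2 * s₃) * (s₁ + s₃) * s₁ * s₃ /
       ((2 * s₁ - s₃) * (2 * s₃ - s₁) * s₂ * (s₂ - s₁) * (s₂ - s₃)) +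
     (2 * s₂ + s₃) * (s₂ + 2 * s₃) * (s₂ + s₃) * s₂ * s₃ /
       ((2 * s₂ - s₃) * (2 * s₃ - s₂) * s₁ * (s₁ - s₂) * (s₁ - s₃)) =
     20 * (s₁ + s₂ + s₃) ^ 3 / (s₁ * s₂ * s₃) -
       31 * (s₁ * s₂ + s₁ * s₃ + s₂ * s₃) * (s₁ + s₂ + s₃) / (s₁ * s₂ * s₃) + 11) ∧
    (s₁ + s₂ + s₃ = 0 →
     80 * s₁ ^ 6 / (s₂ * (s₂ - s₁) * (s₂ - 2 * s₁) * s₃ * (s₃ - s₁) * (s₃ - 2 * s₁)) +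
     80 * s₂ ^ 6 / (s₁ * (s₁ - s₂) * (s₁ - 2 * s₂) * s₃ * (s₃ - s₂) * (s₃ - 2 * s₂)) +
     80 * s₃ ^ 6 / (s₁ * (s₁ - s₃) * (s₁ - 2 * s₃) * s₂ * (s₂ - s₃) * (s₂ - 2 * s₃)) +
     (2 * s₁ + s₂) * (s₁ + 2 * s₂) * (s₁ + s₂) * s₁ * s₂ /
       ((2 * s₁ - s₂) * (2 * s₂ - s₁) * s₃ * (s₃ - s₁) * (s₃ - s₂)) +
     (2 * s₁ + s₃) * (s₁ + 2 * s₃) * (s₁ + s₃) * s₁ * s₃ /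
       ((2 * s₁ - s₃) * (2 * s₃ - s₁) * s₂ * (s₂ - s₁) * (s₂ - s₃)) +
     (2 * s₂ + s₃) * (s₂ + 2 * s₃) * (s₂ + s₃) * s₂ * s₃ /
       ((2 * s₂ - s₃) * (2 * s₃ - s₂) * s₁ * (s₁ - s₂) * (s₁ - s₃)) = 11) := by
  have d₁₂ : s₁ - s₂ ≠ 0 := sub_ne_zero.mpr h₁₂
  have d₁₃ : s₁ - s₃ ≠ 0 := sub_ne_zero.mpr h₁₃
  have d₂₃ : s₂ - s₃ ≠ 0 := sub_ne_zero.mpr h₂₃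
  have e₁₂ : s₁ - 2 * s₂ ≠ 0 := sub_ne_zero.mpr g₁₂
  have e₂₁ : s₂ - 2 * s₁ ≠ 0 := sub_ne_zero.mpr g₂₁
  have e₁₃ : s₁ - 2 * s₃ ≠ 0 := sub_ne_zero.mpr g₁₃
  have e₃₁ : s₃ - 2 * s₁ ≠ 0 := sub_ne_zero.mpr g₃₁
  have e₂₃ : s₂ - 2 * s₃ ≠ 0 := sub_ne_zero.mpr g₂₃
  have e₃₂ : s₃ - 2 * s₂ ≠ 0 := sub_ne_zero.mpr g₃₂
  -- Orient every difference one way, so that clearing denominators yields the true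
  -- least common denominator rather than a product containing both `x - y` and `y - x`.
  rw [← neg_sub s₁ s₂, ← neg_sub s₁ s₃, ← neg_sub s₂ s₃,
    ← neg_sub s₂ (2 * s₁), ← neg_sub s₁ (2 * s₂), ← neg_sub s₃ (2 * s₁),
    ← neg_sub s₁ (2 * s₃), ← neg_sub s₃ (2 * s₂), ← neg_sub s₂ (2 * s₃)]
  refine (fun h => ⟨h, fun hs => h.trans (by simp [hs])⟩) ?_
  -- Naming the factors `sᵢ - 2 * sⱼ` makes `field_simp` treat them as atoms.
  generalize q₁₂ : s₁ - 2 * s₂ = p₁₂ at *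
  generalize q₂₁ : s₂ - 2 * s₁ = p₂₁ at *
  generalize q₁₃ : s₁ - 2 * s₃ = p₁₃ at *
  generalize q₃₁ : s₃ - 2 * s₁ = p₃₁ at *
  generalize q₂₃ : s₂ - 2 * s₃ = p₂₃ at *
  generalize q₃₂ : s₃ - 2 * s₂ = p₃₂ at *
  field_simp
  rw [← q₁₂, ← q₂₁, ← q₁₃, ← q₃₁, ← q₂₃, ← q₃₂]
  ring
end

section
/- There exists a 3-dimensional ℂ-vector space N with basis v₀, v₁, v₂ and a commutative ℂ-bilinear multiplication * on N such that v₀ is a two-sided unit (v₀*x = x*v₀ = x for all x ∈ N), v₁*v₁ = v₂, v₁*v₂ = v₂*v₁ = v₂, and v₂*v₂ = 0. For this multiplication, (v₁*v₁)*v₂ = 0 while v₁*(v₁*v₂) = v₂ ≠ 0, so the multiplication is not associative, even though N is spanned by v₀ together with elements obtained from v₀ by iterated left multiplication by v₁ (namely v₁ and v₁*v₁), and all the relevant left-multiplication operators commute. -/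
/-!
On `Fin 3 → ℂ` with its standard basis `e₀, e₁, e₂`, the multiplication table
`e₀ * x = x`, `e₁ * e₁ = e₁ * e₂ = e₂`, `e₂ * e₂ = 0` extends bilinearly to `counterexampleMul`.
It is commutative because the table is symmetric, and it is not associative because
`(e₁ * e₁) * e₂ = e₂ * e₂ = 0` whereas `e₁ * (e₁ * e₂) = e₁ * e₂ = e₂`.
-/

/-- The commutative bilinear multiplication on `Fin 3 → ℂ` with unit `e₀` and
`e₁ * e₁ = e₂`, `e₁ * e₂ = e₂`, `e₂ * e₂ = 0`, written out in coordinates. -/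
noncomputable def counterexampleMul :
    (Fin 3 → ℂ) →ₗ[ℂ] (Fin 3 → ℂ) →ₗ[ℂ] (Fin 3 → ℂ) :=
  LinearMap.mk₂ ℂ
    (fun x y => ![x 0 * y 0, x 0 * y 1 + x 1 * y 0,
      x 0 * y 2 + x 2 * y 0 + x 1 * y 1 + x 1 * y 2 + x 2 * y 1])
    (by intro x x' y; ext i; fin_cases i <;> simp <;> ring)
    (by intro c x y; ext i; fin_cases i <;> simp <;> ring)
    (by intro x y y'; ext i; fin_cases i <;> simp <;> ring)
    (by intro c x y; ext i; fin_cases i <;> simp <;> ring)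

lemma counterexampleMul_apply (x y : Fin 3 → ℂ) :
    counterexampleMul x y = ![x 0 * y 0, x 0 * y 1 + x 1 * y 0,
      x 0 * y 2 + x 2 * y 0 + x 1 * y 1 + x 1 * y 2 + x 2 * y 1] := rfl

lemma span_standard_eq_top :
    Submodule.span ℂ {(![1, 0, 0] : Fin 3 → ℂ), ![0, 1, 0], ![0, 0, 1]} = ⊤ := by
  refine eq_top_iff.2 fun x _ => ?_
  refine Submodule.mem_span_triple.2 ⟨x 0, x 1, x 2, ?_⟩
  ext i; fin_cases i <;> simp

/-- There is a 3-dimensional `ℂ`-vector space (here `Fin 3 → ℂ`) with a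
basis `v₀, v₁, v₂` and a commutative bilinear multiplication such that `v₀` is a two-sided
unit, `v₁ * v₁ = v₂`, `v₁ * v₂ = v₂ * v₁ = v₂` and `v₂ * v₂ = 0`.  For this multiplication
`(v₁ * v₁) * v₂ = 0` while `v₁ * (v₁ * v₂) = v₂ ≠ 0`, so the multiplication is not
associative, even though the space is spanned by `v₀` together with elements obtained from
`v₀` by iterated left multiplication by `v₁` (namely `v₁` and `v₁ * v₁`), and the relevant
left-multiplication operators (those attached to the elements `ψ₁(x_i) = v₁`) commute. -/
theorem nonassociative_counterexample :
    ∃ (mul : (Fin 3 → ℂ) →ₗ[ℂ] (Fin 3 → ℂ) →ₗ[ℂ] (Fin 3 → ℂ)) (v₀ v₁ v₂ : Fin 3 → ℂ),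
      Module.finrank ℂ (Fin 3 → ℂ) = 3 ∧
      LinearIndependent ℂ ![v₀, v₁, v₂] ∧
      Submodule.span ℂ {v₀, v₁, v₂} = ⊤ ∧
      (∀ x y, mul x y = mul y x) ∧
      (∀ x, mul v₀ x = x) ∧ (∀ x, mul x v₀ = x) ∧
      mul v₁ v₁ = v₂ ∧ mul v₁ v₂ = v₂ ∧ mul v₂ v₁ = v₂ ∧ mul v₂ v₂ = 0 ∧
      mul (mul v₁ v₁) v₂ = 0 ∧ mul v₁ (mul v₁ v₂) = v₂ ∧ v₂ ≠ 0 ∧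
      ¬ (∀ x y z, mul (mul x y) z = mul x (mul y z)) ∧
      Submodule.span ℂ {v₀, v₁, mul v₁ v₁} = ⊤ ∧
      (∀ a ∈ ({v₁} : Set (Fin 3 → ℂ)), ∀ b ∈ ({v₁} : Set (Fin 3 → ℂ)),
        ∀ x, mul a (mul b x) = mul b (mul a x)) := by
  have h11 : counterexampleMul ![0, 1, 0] ![0, 1, 0] = ![0, 0, 1] := by
    simp [counterexampleMul_apply]
  have h12 : counterexampleMul ![0, 1, 0] ![0, 0, 1] = ![0, 0, 1] := by
    simp [counterexampleMul_apply]
  have h22 : counterexampleMul ![0, 0, 1] ![0, 0, 1] = 0 := by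
    ext i; fin_cases i <;> simp [counterexampleMul_apply]
  have hcomm (x y) : counterexampleMul x y = counterexampleMul y x := by
    ext i; fin_cases i <;> simp [counterexampleMul_apply] <;> ring
  have hone (x) : counterexampleMul ![1, 0, 0] x = x := by
    ext i; fin_cases i <;> simp [counterexampleMul_apply]
  have hne : (![0, 0, 1] : Fin 3 → ℂ) ≠ 0 := fun h => by simpa using congrFun h 2
  refine ⟨counterexampleMul, ![1, 0, 0], ![0, 1, 0], ![0, 0, 1], by simp, ?_,
    span_standard_eq_top, hcomm, hone, fun x => (hcomm _ _).trans (hone x), h11, h12,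
    (hcomm _ _).trans h12, h22, by rw [h11, h22], by rw [h12, h12], hne, fun h => hne ?_,
    by rw [h11]; exact span_standard_eq_top, ?_⟩
  · rw [Fintype.linearIndependent_iff]
    intro g hg i
    have h := congrFun hg i
    fin_cases i <;> simpa [Fin.sum_univ_three] using h
  · simpa only [h11, h12, h22] using (h ![0, 1, 0] ![0, 1, 0] ![0, 0, 1]).symm
  · rintro a rfl b rfl x
    rfl
end
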